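/- Let λ ≥ 2 and let u ∈ L^∞(ℝ₊) be twice continuously differentiable on ℝ₊ with u′ ∈ L^∞(ℝ₊). Then for every x > 0, lim_{σ→1⁻} (1/Γ(−σ)) ∫₀^∞ (W_t^λ u(x) − u(x)) t^{−1−σ} dt = −u″(x) + (λ(λ−1)/x²) u(x). -/

import Mathlib

open Real MeasureTheory Set Filter

noncomputable section

/-- The modified Bessel function of the first kind `I_ν(z)`. -/
def besselI (ν z : ℝ) : ℝ :=
  ∑' k : ℕ, (z / 2) ^ (2 * (k : ℝ) + ν) / ((Nat.factorial k : ℝ) * Real.Gamma ((k : ℝ) + ν + 1))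

/-- The Bessel heat kernel `W_t^λ(x,y)`. -/
def besselHeatKernel (lam t x y : ℝ) : ℝ :=
  Real.sqrt (x * y) / (2 * t) * besselI (lam - 1 / 2) (x * y / (2 * t)) *
    Real.exp (-(x ^ 2 + y ^ 2) / (4 * t))

/-- The Bessel–Poisson kernel `P_t^λ(x,y)`, obtained by subordination. -/
def besselPoissonKernel (lam t x y : ℝ) : ℝ :=
  t / (2 * Real.sqrt Real.pi) *
    ∫ s in Set.Ioi (0 : ℝ),
      s ^ (-(3 : ℝ) / 2) * Real.exp (-t ^ 2 / (4 * s)) * besselHeatKernel lam s x y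

/-- The Bessel heat semigroup `W_t^λ u (x)`. -/
def heatSemigroup (lam : ℝ) (u : ℝ → ℝ) (t x : ℝ) : ℝ :=
  ∫ y in Set.Ioi (0 : ℝ), besselHeatKernel lam t x y * u y

/-- The Bessel–Poisson semigroup `P_t^λ f (x)`. -/
def poissonSemigroup (lam : ℝ) (f : ℝ → ℝ) (t x : ℝ) : ℝ :=
  ∫ y in Set.Ioi (0 : ℝ), besselPoissonKernel lam t x y * f y

/-- The set of Hölder quotients of `f` on `(0,∞)`. -/
def holderRatioSet (α : ℝ) (f : ℝ → ℝ) : Set ℝ :=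
  {r | ∃ x y : ℝ, 0 < x ∧ 0 < y ∧ x ≠ y ∧ r = |f x - f y| / |x - y| ^ α}

/-- The set of growth quotients `|f x|/x^α` of `f` on `(0,∞)`. -/
def growthRatioSet (α : ℝ) (f : ℝ → ℝ) : Set ℝ :=
  {r | ∃ x : ℝ, 0 < x ∧ r = |f x| / x ^ α}

/-- Membership in the Hölder space `C^α_+` (equal to `Lip_+` when `α = 1`). -/
def MemHolderPlus (α : ℝ) (f : ℝ → ℝ) : Prop :=
  ContinuousOn f (Set.Ioi 0) ∧ BddAbove (holderRatioSet α f) ∧ BddAbove (growthRatioSet α f)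

/-- The `C^α_+` norm. -/
def holderPlusNorm (α : ℝ) (f : ℝ → ℝ) : ℝ :=
  sSup (holderRatioSet α f) + sSup (growthRatioSet α f)

/-- `Γ(-σ)`, written through the functional equation `Γ(-σ) = Γ(2-σ)/((-σ)(1-σ))`. -/
def gammaNeg (σ : ℝ) : ℝ := Real.Gamma (2 - σ) / (-σ * (1 - σ))

/-- The kernel `K_σ^λ(x,y)`. -/
def fracKernelK (lam σ x y : ℝ) : ℝ :=
  1 / (-gammaNeg σ) * ∫ t in Set.Ioi (0 : ℝ), besselHeatKernel lam t x y * t ^ (-1 - σ)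

/-- `W_t^λ 1 (x)`. -/
def heatOne (lam t x : ℝ) : ℝ := ∫ y in Set.Ioi (0 : ℝ), besselHeatKernel lam t x y

/-- The function `B_σ^λ(x)`. -/
def fracFunB (lam σ x : ℝ) : ℝ :=
  1 / gammaNeg σ * ∫ t in Set.Ioi (0 : ℝ), (heatOne lam t x - 1) * t ^ (-1 - σ)

/-- The integer `m` with `m - 1 ≤ β < m`. -/
def fracOrder (β : ℝ) : ℕ := Nat.floor β + 1

/-- The Segovia–Wheeden fractional derivative `∂_t^β F(t)`, a complex number. -/
def fracDeriv (β : ℝ) (F : ℝ → ℝ) (t : ℝ) : ℂ :=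
  Complex.exp (-(Real.pi * ((fracOrder β : ℝ) - β)) * Complex.I) /
      Complex.ofReal (Real.Gamma ((fracOrder β : ℝ) - β)) *
    Complex.ofReal
      (∫ s in Set.Ioi (0 : ℝ),
        iteratedDeriv (fracOrder β) F (t + s) * s ^ ((fracOrder β : ℝ) - β - 1))

/-! ### The Bessel function -/

theorem factorial_mul_Gamma_le (ν : ℝ) (hν : 0 ≤ ν) (k : ℕ) :
    (k.factorial : ℝ) * Real.Gamma (ν + 1) ≤ Real.Gamma ((k : ℝ) + ν + 1) := by
  induction k with
  | zero => simp
  | succ k ih =>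
    have h : ((k + 1 : ℕ) : ℝ) + ν + 1 = ((k : ℝ) + ν + 1) + 1 := by push_cast; ring
    have hk : (0 : ℝ) ≤ k := k.cast_nonneg
    rw [h, Real.Gamma_add_one (s := (k : ℝ) + ν + 1) (by positivity), Nat.factorial_succ]
    push_cast
    have hG : 0 < Real.Gamma (ν + 1) := Real.Gamma_pos_of_pos (by linarith)
    calc ((k : ℝ) + 1) * k.factorial * Real.Gamma (ν + 1)
        = ((k : ℝ) + 1) * (k.factorial * Real.Gamma (ν + 1)) := by ring
      _ ≤ ((k : ℝ) + ν + 1) * Real.Gamma ((k : ℝ) + ν + 1) := by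
        gcongr
        linarith

theorem besselI_term_nonneg (ν : ℝ) (hν : 0 ≤ ν) {z : ℝ} (hz : 0 < z) (k : ℕ) :
    0 ≤ (z / 2) ^ (2 * (k : ℝ) + ν) /
      ((k.factorial : ℝ) * Real.Gamma ((k : ℝ) + ν + 1)) := by
  have : 0 < Real.Gamma ((k : ℝ) + ν + 1) := Real.Gamma_pos_of_pos (by positivity)
  positivity

theorem besselI_term_le (ν : ℝ) (hν : 0 ≤ ν) {z : ℝ} (hz : 0 < z) (k : ℕ) :
    (z / 2) ^ (2 * (k : ℝ) + ν) / ((k.factorial : ℝ) * Real.Gamma ((k : ℝ) + ν + 1)) ≤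
      (z / 2) ^ ν / Real.Gamma (ν + 1) * (z ^ (2 * k) / ((2 * k).factorial : ℝ)) := by
  have hG : 0 < Real.Gamma (ν + 1) := Real.Gamma_pos_of_pos (by linarith)
  have hfac : ((2 * k).factorial : ℝ) ≤ 2 ^ (2 * k) * (k.factorial * k.factorial) := by
    have h1 := Nat.add_choose_mul_factorial_mul_factorial k k
    have h2 := Nat.choose_le_two_pow (k + k) k
    rw [← two_mul] at h1 h2
    rw [← h1]
    push_cast
    rw [mul_assoc]
    gcongr
    exact_mod_cast h2
  have hpow : (z / 2) ^ (2 * (k : ℝ) + ν) = (z / 2) ^ (2 * k) * (z / 2) ^ ν := by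
    rw [Real.rpow_add (by positivity), ← Real.rpow_natCast (z / 2) (2 * k)]
    push_cast
    rfl
  have hle := factorial_mul_Gamma_le ν hν k
  rw [hpow]
  calc (z / 2) ^ (2 * k) * (z / 2) ^ ν / ((k.factorial : ℝ) * Real.Gamma ((k : ℝ) + ν + 1))
      ≤ (z / 2) ^ (2 * k) * (z / 2) ^ ν /
          ((k.factorial : ℝ) * (k.factorial * Real.Gamma (ν + 1))) := by gcongr
    _ = (z / 2) ^ ν / Real.Gamma (ν + 1) *
          (z ^ (2 * k) / (2 ^ (2 * k) * (k.factorial * k.factorial))) := by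
        rw [div_pow]; field_simp
    _ ≤ _ := by gcongr

theorem besselI_summable (ν : ℝ) (hν : 0 ≤ ν) {z : ℝ} (hz : 0 < z) :
    Summable fun k : ℕ => (z / 2) ^ (2 * (k : ℝ) + ν) /
      ((k.factorial : ℝ) * Real.Gamma ((k : ℝ) + ν + 1)) :=
  Summable.of_nonneg_of_le (besselI_term_nonneg ν hν hz) (besselI_term_le ν hν hz)
    ((Real.hasSum_cosh z).summable.mul_left _)

theorem besselI_nonneg (ν : ℝ) (hν : 0 ≤ ν) {z : ℝ} (hz : 0 < z) : 0 ≤ besselI ν z :=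
  tsum_nonneg (besselI_term_nonneg ν hν hz)

theorem besselI_le (ν : ℝ) (hν : 0 ≤ ν) {z : ℝ} (hz : 0 < z) :
    besselI ν z ≤ (z / 2) ^ ν / Real.Gamma (ν + 1) * Real.exp z := by
  have hG : 0 < Real.Gamma (ν + 1) := Real.Gamma_pos_of_pos (by linarith)
  have h := (besselI_summable ν hν hz).tsum_le_tsum (besselI_term_le ν hν hz)
    ((Real.hasSum_cosh z).summable.mul_left _)
  rw [tsum_mul_left, (Real.hasSum_cosh z).tsum_eq] at h
  refine h.trans ?_
  gcongr
  rw [Real.cosh_eq]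
  have : Real.exp (-z) ≤ Real.exp z := Real.exp_le_exp.2 (by linarith)
  linarith

theorem measurable_indicator_besselI (ν : ℝ) (hν : 0 ≤ ν) :
    Measurable ((Ioi (0 : ℝ)).indicator (besselI ν)) := by
  refine measurable_of_tendsto_metrizable
    (f := fun (n : ℕ) => (Ioi (0 : ℝ)).indicator fun z => ∑ k ∈ Finset.range n,
      (z / 2) ^ (2 * (k : ℝ) + ν) / ((k.factorial : ℝ) * Real.Gamma ((k : ℝ) + ν + 1)))
    (fun n => Measurable.indicator (by fun_prop) measurableSet_Ioi) ?_
  rw [tendsto_pi_nhds]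
  intro z
  by_cases hz : z ∈ Ioi (0 : ℝ)
  · simp only [indicator_of_mem hz]
    exact (besselI_summable ν hν hz).hasSum.tendsto_sum_nat
  · simp only [indicator_of_notMem hz]
    exact tendsto_const_nhds

/-! ### Bounds and measurability for the heat kernel -/

theorem besselHeatKernel_nonneg {lam t x y : ℝ} (hlam : 1 / 2 ≤ lam) (ht : 0 < t) (hx : 0 < x)
    (hy : 0 < y) : 0 ≤ besselHeatKernel lam t x y := by
  have := besselI_nonneg (lam - 1 / 2) (by linarith) (z := x * y / (2 * t)) (by positivity)
  unfold besselHeatKernel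
  positivity

theorem besselHeatKernel_le {lam t x y : ℝ} (hlam : 1 / 2 ≤ lam) (ht : 0 < t) (hx : 0 < x)
    (hy : 0 < y) :
    besselHeatKernel lam t x y ≤ x ^ lam / Real.Gamma (lam + 1 / 2) *
      (t ^ (-lam - 1 / 2) * (y ^ lam * Real.exp (-(x - y) ^ 2 / (4 * t)))) := by
  have hG : 0 < Real.Gamma (lam + 1 / 2) := Real.Gamma_pos_of_pos (by linarith)
  have hb := besselI_le (lam - 1 / 2) (by linarith) (z := x * y / (2 * t)) (by positivity)
  rw [show lam - 1 / 2 + 1 = lam + 1 / 2 by ring] at hb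
  have hpow : (x * y / (2 * t) / 2) ^ (lam - 1 / 2) ≤ (x * y / t) ^ (lam - 1 / 2) := by
    apply Real.rpow_le_rpow (by positivity) _ (by linarith)
    rw [div_div, div_le_div_iff₀ (by positivity) ht]
    nlinarith [mul_pos (mul_pos hx hy) ht]
  have hexp : Real.exp (x * y / (2 * t)) * Real.exp (-(x ^ 2 + y ^ 2) / (4 * t)) =
      Real.exp (-(x - y) ^ 2 / (4 * t)) := by
    rw [← Real.exp_add]
    congr 1
    field_simp
    ring
  have hmul : Real.sqrt (x * y) / t * (x * y / t) ^ (lam - 1 / 2) =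
      x ^ lam * y ^ lam * t ^ (-lam - 1 / 2) := by
    rw [Real.sqrt_eq_rpow, Real.div_rpow (by positivity) ht.le, ← Real.mul_rpow hx.le hy.le,
      show -lam - 1 / 2 = -(1 + (lam - 1 / 2)) by ring, Real.rpow_neg ht.le,
      Real.rpow_add ht, Real.rpow_one, div_mul_div_comm, ← Real.rpow_add (by positivity)]
    rw [show 1 / 2 + (lam - 1 / 2) = lam by ring]
    rfl
  unfold besselHeatKernel
  calc _ ≤ Real.sqrt (x * y) / t * ((x * y / t) ^ (lam - 1 / 2) / Real.Gamma (lam + 1 / 2) *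
        Real.exp (x * y / (2 * t))) * Real.exp (-(x ^ 2 + y ^ 2) / (4 * t)) := by
        have := besselI_nonneg (lam - 1 / 2) (by linarith) (z := x * y / (2 * t)) (by positivity)
        gcongr
        · linarith
        · exact hb.trans (by gcongr)
    _ = (Real.sqrt (x * y) / t * (x * y / t) ^ (lam - 1 / 2)) / Real.Gamma (lam + 1 / 2) *
        (Real.exp (x * y / (2 * t)) * Real.exp (-(x ^ 2 + y ^ 2) / (4 * t))) := by ring
    _ = _ := by rw [hexp, hmul]; ring

/-- A globally measurable function that agrees with the heat kernel for positive arguments. -/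
theorem exists_measurable_eq_besselHeatKernel {lam x : ℝ} (hlam : 1 / 2 ≤ lam) (hx : 0 < x) :
    ∃ G : ℝ × ℝ → ℝ, Measurable G ∧
      ∀ t y, 0 < t → 0 < y → G (t, y) = besselHeatKernel lam t x y := by
  have hI := measurable_indicator_besselI (lam - 1 / 2) (by linarith)
  refine ⟨fun p => Real.sqrt (x * p.2) / (2 * p.1) *
    (Ioi (0 : ℝ)).indicator (besselI (lam - 1 / 2)) (x * p.2 / (2 * p.1)) *
      Real.exp (-(x ^ 2 + p.2 ^ 2) / (4 * p.1)), by fun_prop, fun t y ht hy => ?_⟩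
  have : x * y / (2 * t) ∈ Ioi (0 : ℝ) := by rw [mem_Ioi]; positivity
  simp only [indicator_of_mem this]
  rfl

theorem aestronglyMeasurable_besselHeatKernel {lam t x : ℝ} (hlam : 1 / 2 ≤ lam) (ht : 0 < t)
    (hx : 0 < x) :
    AEStronglyMeasurable (fun y => besselHeatKernel lam t x y) (volume.restrict (Ioi 0)) := by
  obtain ⟨G, hG, hGe⟩ := exists_measurable_eq_besselHeatKernel hlam hx
  refine AEStronglyMeasurable.congr (f := fun y => G (t, y))
    (hG.comp (by fun_prop : Measurable fun y : ℝ => (t, y))).aestronglyMeasurable ?_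
  filter_upwards [ae_restrict_mem measurableSet_Ioi] with y hy using hGe t y ht hy

theorem aestronglyMeasurable_heatSemigroup {lam x : ℝ} (hlam : 1 / 2 ≤ lam) (hx : 0 < x)
    {u : ℝ → ℝ} (hu : ContinuousOn u (Ioi 0)) :
    AEStronglyMeasurable (fun t => heatSemigroup lam u t x) (volume.restrict (Ioi 0)) := by
  obtain ⟨G, hG, hGe⟩ := exists_measurable_eq_besselHeatKernel hlam hx
  have hu' : Measurable ((Ioi (0 : ℝ)).indicator u) := by
    classical
    rw [← piecewise_eq_indicator]
    exact hu.measurable_piecewise continuousOn_const measurableSet_Ioi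
  have hm : Measurable fun p : ℝ × ℝ => G p * (Ioi (0 : ℝ)).indicator u p.2 := by fun_prop
  refine (hm.stronglyMeasurable.integral_prod_right'
    (ν := volume.restrict (Ioi (0 : ℝ)))).aestronglyMeasurable.congr ?_
  filter_upwards [ae_restrict_mem measurableSet_Ioi] with t ht
  refine setIntegral_congr_fun measurableSet_Ioi fun y hy => ?_
  simp only [indicator_of_mem hy, hGe t y ht hy]

theorem integrableOn_rpow_mul_exp_neg_sq_sub {p a x : ℝ} (hp : -1 < p) (ha : 0 < a) :
    IntegrableOn (fun y => y ^ p * Real.exp (-(x - y) ^ 2 / a)) (Ioi 0) := by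
  have h := (integrableOn_rpow_mul_exp_neg_mul_sq (b := 1 / (2 * a)) (by positivity) hp).const_mul
    (Real.exp (x ^ 2 / a))
  refine Integrable.mono' h (Measurable.aestronglyMeasurable (by fun_prop)) ?_
  filter_upwards [ae_restrict_mem measurableSet_Ioi] with y hy
  have hy : 0 < y := hy
  rw [Real.norm_of_nonneg (by positivity), mul_left_comm, ← Real.exp_add]
  gcongr
  rw [neg_mul, ← sub_eq_add_neg, div_mul_eq_mul_div, div_sub_div _ _ ha.ne' (by positivity),
    div_le_div_iff₀ ha (by positivity)]
  nlinarith [mul_nonneg (mul_pos ha ha).le (sq_nonneg (y - 2 * x)),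
    mul_pos ha ha]

theorem integrableOn_besselHeatKernel_mul {lam t x : ℝ} (hlam : 1 / 2 ≤ lam) (ht : 0 < t)
    (hx : 0 < x) {f : ℝ → ℝ} (hf : AEStronglyMeasurable f (volume.restrict (Ioi 0)))
    {K : ℝ} (hK : ∀ y, 0 < y → |f y| ≤ K * (1 + y ^ lam + y ^ (lam + 4))) :
    IntegrableOn (fun y => besselHeatKernel lam t x y * f y) (Ioi 0) := by
  have hg (p : ℝ) (hp : -1 < p) :=
    integrableOn_rpow_mul_exp_neg_sq_sub (x := x) hp (show 0 < 4 * t by positivity)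
  have h := (((hg lam (by linarith)).add (hg (lam + lam) (by linarith))).add
    (hg (lam + (lam + 4)) (by linarith))).const_mul
      (x ^ lam / Real.Gamma (lam + 1 / 2) * t ^ (-lam - 1 / 2) * K)
  refine Integrable.mono' h ((aestronglyMeasurable_besselHeatKernel hlam ht hx).mul hf) ?_
  filter_upwards [ae_restrict_mem measurableSet_Ioi] with y hy
  have hy : 0 < y := hy
  have hn := besselHeatKernel_nonneg hlam ht hx hy
  rw [norm_mul, Real.norm_of_nonneg hn, Real.norm_eq_abs]
  calc _ ≤ (x ^ lam / Real.Gamma (lam + 1 / 2) *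
      (t ^ (-lam - 1 / 2) * (y ^ lam * Real.exp (-(x - y) ^ 2 / (4 * t))))) *
        (K * (1 + y ^ lam + y ^ (lam + 4))) :=
        mul_le_mul (besselHeatKernel_le hlam ht hx hy) (hK y hy) (abs_nonneg _)
          (hn.trans (besselHeatKernel_le hlam ht hx hy))
    _ = _ := by
      simp only [Pi.add_apply, Real.rpow_add hy lam]
      ring

/-! ### Moments of the heat kernel -/

theorem hasSum_pow_div_factorial (q : ℝ) :
    HasSum (fun k : ℕ => q ^ k / (k.factorial : ℝ)) (Real.exp q) := by
  rw [Real.exp_eq_exp_ℝ]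
  exact NormedSpace.expSeries_div_hasSum_exp q

theorem hasSum_mul_pow_div_factorial (q : ℝ) :
    HasSum (fun k : ℕ => (k : ℝ) * (q ^ k / (k.factorial : ℝ))) (q * Real.exp q) := by
  rw [← hasSum_nat_add_iff' 1]
  convert! (hasSum_pow_div_factorial q).mul_left q using 1
  · ext k
    rw [Nat.factorial_succ, pow_succ' q]
    push_cast
    field_simp
  · simp

theorem hasSum_sq_mul_pow_div_factorial (q : ℝ) :
    HasSum (fun k : ℕ => (k : ℝ) ^ 2 * (q ^ k / (k.factorial : ℝ)))
      ((q ^ 2 + q) * Real.exp q) := by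
  rw [← hasSum_nat_add_iff' 1]
  convert! ((hasSum_mul_pow_div_factorial q).add (hasSum_pow_div_factorial q)).mul_left q using 1
  · ext k
    rw [Nat.factorial_succ, pow_succ' q]
    push_cast
    field_simp
  · simp
    ring

theorem besselHeatKernel_moment {lam t x : ℝ} (hlam : 1 / 2 ≤ lam) (ht : 0 < t) (hx : 0 < x)
    (m : ℕ) {S : ℝ}
    (hS : HasSum (fun k : ℕ => (x ^ 2 / (4 * t)) ^ k / (k.factorial : ℝ) *
      (Real.Gamma (k + lam + 1 / 2 + m) / Real.Gamma (k + lam + 1 / 2))) S) :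
    ∫ y in Ioi (0 : ℝ), besselHeatKernel lam t x y * (y ^ lam * (y ^ 2) ^ m) =
      x ^ lam * ((4 * t) ^ m * (Real.exp (-(x ^ 2 / (4 * t))) * S)) := by
  set c : ℕ → ℝ := fun k => Real.sqrt x / (2 * t) * (x / (4 * t)) ^ (2 * (k : ℝ) + (lam - 1 / 2)) /
    (k.factorial * Real.Gamma (k + lam + 1 / 2)) * Real.exp (-(x ^ 2 / (4 * t))) with hc
  set F : ℕ → ℝ → ℝ := fun k y =>
    c k * (y ^ (2 * (k + lam + m) : ℝ) * Real.exp (-(1 / (4 * t)) * y ^ 2)) with hF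
  have hGpos (k : ℕ) : 0 < Real.Gamma (k + lam + 1 / 2) :=
    Real.Gamma_pos_of_pos (by positivity)
  have hcpos (k : ℕ) : 0 ≤ c k := by
    have := hGpos k
    simp only [hc]
    positivity
  have hFint (k : ℕ) : Integrable (F k) (volume.restrict (Ioi 0)) :=
    (integrableOn_rpow_mul_exp_neg_mul_sq (b := 1 / (4 * t)) (by positivity)
      (by have : (0 : ℝ) ≤ k := k.cast_nonneg
          have : (0 : ℝ) ≤ m := m.cast_nonneg
          linarith)).const_mul _
  have hval (k : ℕ) : ∫ y in Ioi (0 : ℝ), F k y =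
      x ^ lam * ((4 * t) ^ m * (Real.exp (-(x ^ 2 / (4 * t))) *
        ((x ^ 2 / (4 * t)) ^ k / (k.factorial : ℝ) *
          (Real.Gamma (k + lam + 1 / 2 + m) / Real.Gamma (k + lam + 1 / 2))))) := by
    have hk : (0 : ℝ) ≤ k := k.cast_nonneg
    have hm : (0 : ℝ) ≤ m := m.cast_nonneg
    have h := integral_rpow_mul_exp_neg_mul_rpow (p := 2) (q := 2 * (k + lam + m))
      (b := 1 / (4 * t)) two_pos (by linarith) (by positivity)
    simp only [Real.rpow_two] at h
    simp only [hF]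
    rw [integral_const_mul, h]
    have e1 : (2 * ((k : ℝ) + lam + m) + 1) / 2 = k + lam + 1 / 2 + m := by ring
    have e2 : -(2 * ((k : ℝ) + lam + m) + 1) / 2 = -(k + (lam - 1 / 2) + 1 + m) := by ring
    have hs : 0 < 4 * t := by positivity
    rw [e1, e2, one_div, Real.inv_rpow hs.le, Real.rpow_neg hs.le, inv_inv,
      Real.rpow_add hs, Real.rpow_add hs, Real.rpow_add hs, Real.rpow_one, Real.rpow_natCast,
      Real.rpow_natCast]
    simp only [hc]
    have e3 : (x / (4 * t)) ^ (2 * (k : ℝ) + (lam - 1 / 2)) =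
        (x / (4 * t)) ^ (2 * k) * (x ^ (lam - 1 / 2) / (4 * t) ^ (lam - 1 / 2)) := by
      rw [Real.rpow_add (by positivity), Real.div_rpow hx.le hs.le (lam - 1 / 2),
        ← Real.rpow_natCast (x / (4 * t)) (2 * k)]
      push_cast
      rfl
    have e4 : x ^ lam = Real.sqrt x * x ^ (lam - 1 / 2) := by
      rw [Real.sqrt_eq_rpow, ← Real.rpow_add hx]
      congr 1
      ring
    have hg := hGpos k
    have hp : 0 < (4 * t) ^ (lam - 1 / 2) := by positivity
    rw [e3, e4, pow_mul, div_pow, div_pow, div_pow]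
    generalize (4 * t) ^ (lam - 1 / 2) = P at *
    generalize Real.Gamma (k + lam + 1 / 2) = g at *
    have e5 : ((4 * t) ^ 2) ^ k = (4 * t) ^ k * (4 * t) ^ k := by
      rw [← pow_mul, two_mul, pow_add]
    rw [e5]
    have hsk : 0 < (4 * t) ^ k := by positivity
    generalize (4 * t) ^ k = Q at *
    field_simp
    ring
  have hnorm (k : ℕ) : ∫ y in Ioi (0 : ℝ), ‖F k y‖ = ∫ y in Ioi (0 : ℝ), F k y := by
    refine setIntegral_congr_fun measurableSet_Ioi fun y hy => ?_
    have hy : 0 < y := hy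
    have := hcpos k
    exact Real.norm_of_nonneg (by simp only [hF]; positivity)
  have hsum := ((hS.mul_left (Real.exp (-(x ^ 2 / (4 * t))))).mul_left ((4 * t) ^ m)).mul_left
    (x ^ lam)
  have hH := hasSum_integral_of_summable_integral_norm hFint
    (by simp only [hnorm, hval]; exact hsum.summable)
  simp only [hval] at hH
  rw [← hH.unique hsum]
  refine setIntegral_congr_fun measurableSet_Ioi fun y hy => ?_
  have hy : 0 < y := hy
  simp only [besselHeatKernel, besselI]
  rw [← tsum_mul_left, ← tsum_mul_right, ← tsum_mul_right]
  refine tsum_congr fun k => ?_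
  simp only [hF, hc]
  have e1 : x * y / (2 * t) / 2 = x / (4 * t) * y := by field_simp; norm_num
  have e2 : -(x ^ 2 + y ^ 2) / (4 * t) = -(x ^ 2 / (4 * t)) + -(1 / (4 * t)) * y ^ 2 := by
    field_simp
    ring
  have e3 : y ^ (2 * (k + lam + m) : ℝ) =
      Real.sqrt y * y ^ (2 * (k : ℝ) + (lam - 1 / 2)) * (y ^ lam * (y ^ 2) ^ m) := by
    rw [Real.sqrt_eq_rpow, ← Real.rpow_two, ← Real.rpow_natCast, ← Real.rpow_mul hy.le,
      ← Real.rpow_add hy, ← Real.rpow_add hy, ← Real.rpow_add hy]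
    congr 1
    ring
  rw [e1, e2, e3, Real.exp_add, Real.mul_rpow (by positivity) hy.le, Real.sqrt_mul hx.le,
    show (k : ℝ) + (lam - 1 / 2) + 1 = k + lam + 1 / 2 by ring]
  ring

theorem integral_besselHeatKernel_mul_rpow {lam t x : ℝ} (hlam : 1 / 2 ≤ lam) (ht : 0 < t)
    (hx : 0 < x) :
    ∫ y in Ioi (0 : ℝ), besselHeatKernel lam t x y * y ^ lam = x ^ lam := by
  have h := besselHeatKernel_moment hlam ht hx 0 (S := Real.exp (x ^ 2 / (4 * t))) (by
    convert hasSum_pow_div_factorial (x ^ 2 / (4 * t)) using 2 with k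
    have : 0 < Real.Gamma (k + lam + 1 / 2) := Real.Gamma_pos_of_pos (by positivity)
    rw [Nat.cast_zero, add_zero, div_self this.ne', mul_one])
  rw [← Real.exp_add] at h
  simpa using h

theorem integral_besselHeatKernel_mul_rpow_mul_sq {lam t x : ℝ} (hlam : 1 / 2 ≤ lam) (ht : 0 < t)
    (hx : 0 < x) :
    ∫ y in Ioi (0 : ℝ), besselHeatKernel lam t x y * (y ^ lam * y ^ 2) =
      x ^ lam * (x ^ 2 + (4 * lam + 2) * t) := by
  have hs := ((hasSum_mul_pow_div_factorial (x ^ 2 / (4 * t))).add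
    ((hasSum_pow_div_factorial (x ^ 2 / (4 * t))).mul_left (lam + 1 / 2)))
  have h := besselHeatKernel_moment hlam ht hx 1 (by
    convert hs using 2 with k
    have hp : 0 < (k : ℝ) + lam + 1 / 2 := by positivity
    have := Real.Gamma_pos_of_pos hp
    rw [Nat.cast_one, Real.Gamma_add_one hp.ne', mul_div_cancel_right₀ _ this.ne']
    ring)
  simp only [pow_one] at h
  rw [h, ← add_mul, mul_left_comm (Real.exp _), ← Real.exp_add, neg_add_cancel, Real.exp_zero]
  field_simp
  ring

theorem integral_besselHeatKernel_mul_rpow_mul_pow_four {lam t x : ℝ} (hlam : 1 / 2 ≤ lam)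
    (ht : 0 < t) (hx : 0 < x) :
    ∫ y in Ioi (0 : ℝ), besselHeatKernel lam t x y * (y ^ lam * (y ^ 2) ^ 2) =
      x ^ lam * (x ^ 4 + (8 * lam + 12) * t * x ^ 2 +
        16 * t ^ 2 * ((lam + 1 / 2) * (lam + 3 / 2))) := by
  have hs := ((hasSum_sq_mul_pow_div_factorial (x ^ 2 / (4 * t))).add
    ((hasSum_mul_pow_div_factorial (x ^ 2 / (4 * t))).mul_left (2 * lam + 2))).add
    ((hasSum_pow_div_factorial (x ^ 2 / (4 * t))).mul_left ((lam + 1 / 2) * (lam + 3 / 2)))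
  have h := besselHeatKernel_moment hlam ht hx 2 (by
    convert hs using 2 with k
    have hp : 0 < (k : ℝ) + lam + 1 / 2 := by positivity
    have := Real.Gamma_pos_of_pos hp
    rw [show (k : ℝ) + lam + 1 / 2 + (2 : ℕ) = k + lam + 1 / 2 + 1 + 1 by push_cast; ring,
      Real.Gamma_add_one (s := (k : ℝ) + lam + 1 / 2 + 1) (by positivity),
      Real.Gamma_add_one hp.ne', ← mul_assoc, mul_div_cancel_right₀ _ this.ne']
    ring)
  rw [h, ← mul_assoc (2 * lam + 2), ← add_mul, ← add_mul, mul_left_comm (Real.exp _),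
    ← Real.exp_add, neg_add_cancel, Real.exp_zero]
  field_simp
  ring

theorem integral_besselHeatKernel_mul_quadratic {lam t x : ℝ} (hlam : 1 / 2 ≤ lam) (ht : 0 < t)
    (hx : 0 < x) (A B C : ℝ) :
    IntegrableOn (fun y => besselHeatKernel lam t x y *
      (y ^ lam * (A + B * (y ^ 2 - x ^ 2) + C * (y ^ 2 - x ^ 2) ^ 2))) (Ioi 0) ∧
    ∫ y in Ioi (0 : ℝ), besselHeatKernel lam t x y *
      (y ^ lam * (A + B * (y ^ 2 - x ^ 2) + C * (y ^ 2 - x ^ 2) ^ 2)) =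
      x ^ lam * (A + B * (4 * lam + 2) * t +
        C * (8 * x ^ 2 * t + 16 * t ^ 2 * ((lam + 1 / 2) * (lam + 3 / 2)))) := by
  have hpow (y : ℝ) (hy : 0 < y) : y ^ (lam + 4) = y ^ lam * y ^ 4 := by
    rw [Real.rpow_add hy]
    norm_cast
  have i0 := integrableOn_besselHeatKernel_mul hlam ht hx (f := fun y => y ^ lam) (K := 1)
    (Measurable.aestronglyMeasurable (by fun_prop)) fun y hy => by
      rw [abs_of_nonneg (by positivity)]
      have : 0 < y ^ (lam + 4) := by positivity
      linarith
  have i1 := integrableOn_besselHeatKernel_mul hlam ht hx (f := fun y => y ^ lam * y ^ 2) (K := 1)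
    (Measurable.aestronglyMeasurable (by fun_prop)) fun y hy => by
      rw [abs_of_nonneg (by positivity), hpow y hy]
      have : 0 < y ^ lam := by positivity
      nlinarith [mul_nonneg this.le (sq_nonneg (y ^ 2 - 1))]
  have i2 := integrableOn_besselHeatKernel_mul hlam ht hx (f := fun y => y ^ lam * (y ^ 2) ^ 2)
    (K := 1) (Measurable.aestronglyMeasurable (by fun_prop)) fun y hy => by
      rw [abs_of_nonneg (by positivity), hpow y hy]
      have : 0 < y ^ lam := by positivity
      nlinarith
  have e : (fun y => besselHeatKernel lam t x y *
      (y ^ lam * (A + B * (y ^ 2 - x ^ 2) + C * (y ^ 2 - x ^ 2) ^ 2))) = fun y =>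
      (A - B * x ^ 2 + C * x ^ 4) * (besselHeatKernel lam t x y * y ^ lam) +
      (B - 2 * C * x ^ 2) * (besselHeatKernel lam t x y * (y ^ lam * y ^ 2)) +
      C * (besselHeatKernel lam t x y * (y ^ lam * (y ^ 2) ^ 2)) := by
    ext y
    ring
  rw [e]
  have j0 := i0.const_mul (A - B * x ^ 2 + C * x ^ 4)
  have j1 := i1.const_mul (B - 2 * C * x ^ 2)
  have j2 := i2.const_mul C
  have j01 : Integrable (fun y =>
      (A - B * x ^ 2 + C * x ^ 4) * (besselHeatKernel lam t x y * y ^ lam) +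
      (B - 2 * C * x ^ 2) * (besselHeatKernel lam t x y * (y ^ lam * y ^ 2)))
      (volume.restrict (Ioi 0)) := j0.add j1
  refine ⟨j01.add j2, ?_⟩
  rw [integral_add j01 j2, integral_add j0 j1, integral_const_mul, integral_const_mul,
    integral_const_mul, integral_besselHeatKernel_mul_rpow hlam ht hx,
    integral_besselHeatKernel_mul_rpow_mul_sq hlam ht hx,
    integral_besselHeatKernel_mul_rpow_mul_pow_four hlam ht hx]
  ring

/-! ### An Abelian limit theorem -/

theorem tendsto_one_div_gammaNeg_mul_integral {F : ℝ → ℝ} {L : ℝ}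
    (hF : AEStronglyMeasurable F (volume.restrict (Ioi 0)))
    (h0 : ∀ ε > 0, ∃ δ > 0, ∀ t, 0 < t → t ≤ δ → |F t - L * t| ≤ ε * t)
    (hb : ∀ δ > 0, ∃ C, ∀ t, δ ≤ t → |F t| ≤ C) :
    Tendsto (fun σ : ℝ => 1 / gammaNeg σ * ∫ t in Ioi (0 : ℝ), F t * t ^ (-1 - σ))
      (nhdsWithin 1 (Iio 1)) (nhds (-L)) := by
  have hlim : Tendsto (fun σ : ℝ => (1 - σ) * ∫ t in Ioi (0 : ℝ), F t * t ^ (-1 - σ))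
      (nhdsWithin 1 (Iio 1)) (nhds L) := by
    rw [Metric.tendsto_nhds]
    intro ε hε
    obtain ⟨δ, hδ, hFδ⟩ := h0 (ε / 3) (by positivity)
    obtain ⟨C, hC⟩ := hb δ hδ
    have hC0 : 0 ≤ C := (abs_nonneg _).trans (hC δ le_rfl)
    have hmain : ∀ σ ∈ Ioo (0 : ℝ) 1,
        |(1 - σ) * (∫ t in Ioi (0 : ℝ), F t * t ^ (-1 - σ)) - L * δ ^ (1 - σ)| ≤
          ε / 3 * δ ^ (1 - σ) + (1 - σ) * (C * (δ ^ (-σ) / σ)) := by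
      rintro σ ⟨hσ0, hσ1⟩
      have hI : IntegrableOn (fun t : ℝ => t ^ (-σ)) (Ioc 0 δ) :=
        (intervalIntegrable_iff_integrableOn_Ioc_of_le hδ.le).1
          (intervalIntegral.intervalIntegrable_rpow' (by linarith))
      have hIv : ∫ t in Ioc 0 δ, t ^ (-σ) = δ ^ (1 - σ) / (1 - σ) := by
        rw [← intervalIntegral.integral_of_le hδ.le, integral_rpow (Or.inl (by linarith)),
          show -σ + 1 = 1 - σ by ring, Real.zero_rpow (by linarith), sub_zero]
      have hJ : IntegrableOn (fun t : ℝ => t ^ (-1 - σ)) (Ioi δ) :=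
        integrableOn_Ioi_rpow_of_lt (by linarith) hδ
      have hJv : ∫ t in Ioi δ, t ^ (-1 - σ) = δ ^ (-σ) / σ := by
        rw [integral_Ioi_rpow_of_lt (by linarith) hδ, show -1 - σ + 1 = -σ by ring, neg_div_neg_eq]
      have hmeas : AEStronglyMeasurable (fun t => F t * t ^ (-1 - σ)) (volume.restrict (Ioi 0)) :=
        hF.mul (Measurable.aestronglyMeasurable (by fun_prop))
      have hpt : ∀ t ∈ Ioc 0 δ, |F t * t ^ (-1 - σ) - L * t ^ (-σ)| ≤ ε / 3 * t ^ (-σ) := by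
        rintro t ⟨ht0, htδ⟩
        have e : t ^ (-σ) = t * t ^ (-1 - σ) := by
          rw [show -σ = 1 + (-1 - σ) by ring, Real.rpow_add ht0, Real.rpow_one]
        have hp : 0 < t ^ (-1 - σ) := by positivity
        rw [e, ← mul_assoc, ← sub_mul, abs_mul, abs_of_pos hp, ← mul_assoc]
        gcongr
        exact hFδ t ht0 htδ
      have hpt2 : ∀ t ∈ Ioi δ, |F t * t ^ (-1 - σ)| ≤ C * t ^ (-1 - σ) := by
        intro t ht
        have ht : δ < t := ht
        have hp : 0 < t ^ (-1 - σ) := Real.rpow_pos_of_pos (hδ.trans ht) _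
        rw [abs_mul, abs_of_pos hp]
        gcongr
        exact hC t ht.le
      have hD : IntegrableOn (fun t => F t * t ^ (-1 - σ) - L * t ^ (-σ)) (Ioc 0 δ) := by
        refine Integrable.mono' (hI.const_mul (ε / 3))
          ((hmeas.mono_measure (Measure.restrict_mono Ioc_subset_Ioi_self le_rfl)).sub
            (hI.const_mul L).1) ?_
        filter_upwards [ae_restrict_mem measurableSet_Ioc] with t ht using hpt t ht
      have hE : IntegrableOn (fun t => F t * t ^ (-1 - σ)) (Ioi δ) := by
        refine Integrable.mono' (hJ.const_mul C)
          (hmeas.mono_measure (Measure.restrict_mono (Ioi_subset_Ioi hδ.le) le_rfl)) ?_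
        filter_upwards [ae_restrict_mem measurableSet_Ioi] with t ht using hpt2 t ht
      have hA : IntegrableOn (fun t => F t * t ^ (-1 - σ)) (Ioc 0 δ) := by
        refine (Integrable.add hD (hI.const_mul L)).congr (.of_forall fun t => ?_)
        simp
      have hsplit : ∫ t in Ioi (0 : ℝ), F t * t ^ (-1 - σ) =
          (∫ t in Ioc 0 δ, (F t * t ^ (-1 - σ) - L * t ^ (-σ))) + L * (δ ^ (1 - σ) / (1 - σ)) +
            ∫ t in Ioi δ, F t * t ^ (-1 - σ) := by
        rw [← Ioc_union_Ioi_eq_Ioi hδ.le, setIntegral_union (Ioc_disjoint_Ioi le_rfl)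
          measurableSet_Ioi hA hE, integral_sub hA (hI.const_mul L), integral_const_mul, hIv]
        ring
      have b1 : |∫ t in Ioc 0 δ, (F t * t ^ (-1 - σ) - L * t ^ (-σ))| ≤
          ε / 3 * (δ ^ (1 - σ) / (1 - σ)) := by
        rw [← hIv, ← integral_const_mul]
        refine (abs_integral_le_integral_abs).trans
          (setIntegral_mono_on hD.abs (hI.const_mul _) measurableSet_Ioc hpt)
      have b2 : |∫ t in Ioi δ, F t * t ^ (-1 - σ)| ≤ C * (δ ^ (-σ) / σ) := by
        rw [← hJv, ← integral_const_mul]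
        refine (abs_integral_le_integral_abs).trans
          (setIntegral_mono_on hE.abs (hJ.const_mul _) measurableSet_Ioi hpt2)
      have h1σ : 0 < 1 - σ := by linarith
      rw [hsplit]
      calc _ = |(1 - σ) * ((∫ t in Ioc 0 δ, (F t * t ^ (-1 - σ) - L * t ^ (-σ))) +
            ∫ t in Ioi δ, F t * t ^ (-1 - σ))| := by
            congr 1
            field_simp
            ring
        _ ≤ (1 - σ) * (ε / 3 * (δ ^ (1 - σ) / (1 - σ)) + C * (δ ^ (-σ) / σ)) := by
            rw [abs_mul, abs_of_pos h1σ]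
            gcongr
            exact (abs_add_le _ _).trans (add_le_add b1 b2)
        _ = _ := by field_simp
    have hg : Tendsto (fun σ : ℝ => ε / 3 * δ ^ (1 - σ) + (1 - σ) * (C * (δ ^ (-σ) / σ)) +
        |L * δ ^ (1 - σ) - L|) (nhdsWithin 1 (Iio 1)) (nhds (ε / 3)) := by
      have hcont : ContinuousAt (fun σ : ℝ => ε / 3 * δ ^ (1 - σ) +
          (1 - σ) * (C * (δ ^ (-σ) / σ)) + |L * δ ^ (1 - σ) - L|) 1 := by
        have c1 : ContinuousAt (fun σ : ℝ => δ ^ (1 - σ)) 1 :=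
          ContinuousAt.rpow continuousAt_const (by fun_prop) (Or.inl hδ.ne')
        have c2 : ContinuousAt (fun σ : ℝ => δ ^ (-σ)) 1 :=
          ContinuousAt.rpow continuousAt_const (by fun_prop) (Or.inl hδ.ne')
        have c3 : ContinuousAt (fun σ : ℝ => δ ^ (-σ) / σ) 1 :=
          c2.div continuousAt_id one_ne_zero
        fun_prop
      simpa using hcont.tendsto.mono_left nhdsWithin_le_nhds
    filter_upwards [hg.eventually_lt_const (show ε / 3 < ε by linarith),
      Ioo_mem_nhdsLT (zero_lt_one' ℝ)] with σ h1 hσ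
    rw [Real.dist_eq]
    refine lt_of_le_of_lt ((abs_sub_le _ (L * δ ^ (1 - σ)) _).trans ?_) h1
    gcongr
    exact hmain σ hσ
  have hco : Tendsto (fun σ : ℝ => -σ / Real.Gamma (2 - σ)) (nhdsWithin 1 (Iio 1))
      (nhds (-1)) := by
    have hGc : ContinuousAt Real.Gamma (2 - 1) :=
      (Real.differentiableOn_Gamma_Ioi.differentiableAt (Ioi_mem_nhds (by norm_num))).continuousAt
    have hG1 : Real.Gamma (2 - 1) = 1 := by norm_num
    have hc : ContinuousAt (fun σ : ℝ => -σ / Real.Gamma (2 - σ)) 1 :=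
      continuousAt_id.neg.div
        (ContinuousAt.comp (f := fun σ : ℝ => 2 - σ) hGc (by fun_prop)) (by rw [hG1]; norm_num)
    have := hc.tendsto.mono_left (nhdsWithin_le_nhds (s := Iio 1))
    simpa only [hG1, div_one] using this
  have := hco.mul hlim
  rw [neg_one_mul] at this
  refine this.congr' ?_
  filter_upwards [Ioo_mem_nhdsLT (zero_lt_one' ℝ)] with σ hσ
  rw [gammaNeg, one_div_div]
  ring

/-! ### Second order remainders -/

theorem exists_abs_le_mul_sq_of_hasDerivAt {r r' : ℝ → ℝ} {x : ℝ} (hx : 0 < x)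
    (hr : ∀ y, 0 < y → HasDerivAt r (r' y) y) (hr0 : r x = 0) (hr1 : r' x = 0)
    (hr2 : HasDerivAt r' 0 x) {ε : ℝ} (hε : 0 < ε) :
    ∃ δ, 0 < δ ∧ δ ≤ x / 2 ∧ ∀ y, |y - x| < δ → |r y| ≤ ε * (y - x) ^ 2 := by
  have h := (hasDerivAt_iff_isLittleO.1 hr2).def hε
  obtain ⟨δ, hδ, hball⟩ := Metric.eventually_nhds_iff.1 h
  refine ⟨min δ (x / 2), by positivity, min_le_right _ _, fun y hy => ?_⟩
  have hy1 := hy.trans_le (min_le_left _ _)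
  have hy2 := hy.trans_le (min_le_right _ _)
  have hz (z : ℝ) (hz : z ∈ Metric.closedBall x |y - x|) : |z - x| ≤ |y - x| := by
    simpa [Real.dist_eq] using hz
  have hmv := (convex_closedBall x |y - x|).norm_image_sub_le_of_norm_hasDerivWithin_le
    (f := r) (f' := r') (C := ε * |y - x|) (x := x) (y := y)
    (fun z hz' => (hr z (by
      have := (abs_le.1 ((hz z hz').trans hy2.le)).1
      linarith)).hasDerivWithinAt)
    (fun z hz' => by
      have := hball (y := z) (by rw [Real.dist_eq]; exact (hz z hz').trans_lt hy1)
      simp only [hr1, sub_zero, smul_zero, Real.norm_eq_abs] at this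
      rw [Real.norm_eq_abs]
      exact this.trans (mul_le_mul_of_nonneg_left (hz z hz') hε.le))
    (Metric.mem_closedBall_self (abs_nonneg _)) (by simp [Real.dist_eq])
  rw [hr0, sub_zero, Real.norm_eq_abs, Real.norm_eq_abs, mul_assoc, ← sq, sq_abs] at hmv
  exact hmv

/-! ### Small and large time behaviour of the heat semigroup -/

theorem tendsto_rpow_neg_mul_exp_neg_div (a : ℝ) {b : ℝ} (hb : 0 < b) :
    Tendsto (fun t : ℝ => t ^ (-a) * Real.exp (-b / t)) (nhdsWithin 0 (Ioi 0)) (nhds 0) := by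
  refine ((tendsto_rpow_mul_exp_neg_mul_atTop_nhds_zero a b hb).comp
    tendsto_inv_nhdsGT_zero).congr' ?_
  filter_upwards [self_mem_nhdsWithin] with t ht
  have ht : 0 < t := ht
  simp only [Function.comp_apply]
  rw [Real.inv_rpow ht.le, Real.rpow_neg ht.le, div_eq_mul_inv]

theorem abs_integral_besselHeatKernel_mul_le {lam x K : ℝ} (hlam : 1 / 2 ≤ lam) (hx : 0 < x)
    {r : ℝ → ℝ} (hK : ∀ y, 0 < y → |r y| ≤ K * (1 + y ^ lam + y ^ (lam + 4)))
    (hr : ∀ ε > 0, ∃ δ, 0 < δ ∧ δ ≤ x / 2 ∧ ∀ y, |y - x| < δ → |r y| ≤ ε * (y - x) ^ 2)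
    {ε : ℝ} (hε : 0 < ε) :
    ∃ τ > 0, ∀ t, 0 < t → t ≤ τ →
      |∫ y in Ioi (0 : ℝ), besselHeatKernel lam t x y * r y| ≤ ε * t := by
  set κ := (lam + 1 / 2) * (lam + 3 / 2) with hκ
  set D := ((x / 2) ^ lam * x ^ 2)⁻¹ * (x ^ lam * (8 * x ^ 2 + 16 * κ)) with hD
  have hκ0 : 0 < κ := by rw [hκ]; apply mul_pos <;> linarith
  have hDpos : 0 < D := by positivity
  set η := ε / 2 / D with hη
  have hηpos : 0 < η := by positivity
  obtain ⟨δ, hδ, hδx, hrδ⟩ := hr η hηpos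
  set J : ℝ → ℝ := fun y => x ^ lam / Real.Gamma (lam + 1 / 2) *
    (y ^ lam * Real.exp (-(x - y) ^ 2 / 8) * (K * (1 + y ^ lam + y ^ (lam + 4)))) with hJ
  have hG : 0 < Real.Gamma (lam + 1 / 2) := Real.Gamma_pos_of_pos (by linarith)
  have hJint : IntegrableOn J (Ioi 0) := by
    have hg (p : ℝ) (hp : -1 < p) :=
      integrableOn_rpow_mul_exp_neg_sq_sub (x := x) hp (show (0 : ℝ) < 8 by norm_num)
    refine IntegrableOn.congr_fun ((((hg lam (by linarith)).add (hg (lam + lam)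
      (by linarith))).add (hg (lam + (lam + 4)) (by linarith))).const_mul
        (x ^ lam / Real.Gamma (lam + 1 / 2) * K)) (fun y hy => ?_) measurableSet_Ioi
    have hy : 0 < y := hy
    simp only [Pi.add_apply, hJ, Real.rpow_add hy lam]
    ring
  have hKpos (y : ℝ) (hy : 0 < y) : 0 ≤ K * (1 + y ^ lam + y ^ (lam + 4)) :=
    (abs_nonneg _).trans (hK y hy)
  have hT := (tendsto_rpow_neg_mul_exp_neg_div (lam + 3 / 2)
    (show 0 < δ ^ 2 / 8 by positivity)).mul_const (∫ y in Ioi (0 : ℝ), J y)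
  rw [zero_mul] at hT
  have hev := hT.eventually_le_const (show 0 < ε / 2 by positivity)
  obtain ⟨τ, hτ, hτe⟩ := mem_nhdsGT_iff_exists_Ioc_subset.1 hev
  have hτ : 0 < τ := hτ
  refine ⟨min τ 1, by positivity, fun t ht htτ => ?_⟩
  have ht1 : t ≤ 1 := htτ.trans (min_le_right _ _)
  have htail := hτe ⟨ht, htτ.trans (min_le_left _ _)⟩
  set T := t ^ (-lam - 1 / 2) * Real.exp (-(δ ^ 2 / 8) / t) with hTdef
  have hTt : T = t * (t ^ (-(lam + 3 / 2)) * Real.exp (-(δ ^ 2 / 8) / t)) := by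
    rw [hTdef, show -lam - 1 / 2 = 1 + -(lam + 3 / 2) by ring, Real.rpow_add ht, Real.rpow_one,
      mul_assoc]
  obtain ⟨hQint, hQ⟩ := integral_besselHeatKernel_mul_quadratic hlam ht hx 0 0 1
  have hpt : ∀ y ∈ Ioi (0 : ℝ), ‖besselHeatKernel lam t x y * r y‖ ≤
      η * ((x / 2) ^ lam * x ^ 2)⁻¹ * (besselHeatKernel lam t x y *
        (y ^ lam * (0 + 0 * (y ^ 2 - x ^ 2) + 1 * (y ^ 2 - x ^ 2) ^ 2))) + T * J y := by
    intro y hy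
    have hy : 0 < y := hy
    have hW := besselHeatKernel_nonneg hlam ht hx hy
    have hKy := hKpos y hy
    have hJ0 : 0 ≤ J y := by simp only [hJ]; positivity
    rw [norm_mul, Real.norm_of_nonneg hW, Real.norm_eq_abs]
    by_cases hyx : |y - x| < δ
    · have hyl : x / 2 ≤ y := by linarith [(abs_lt.1 hyx).1]
      have hquad : (y - x) ^ 2 * ((x / 2) ^ lam * x ^ 2) ≤ y ^ lam * (y ^ 2 - x ^ 2) ^ 2 := by
        have h1 : (x / 2) ^ lam ≤ y ^ lam := Real.rpow_le_rpow (by positivity) hyl (by linarith)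
        have h2 : (y - x) ^ 2 * x ^ 2 ≤ (y ^ 2 - x ^ 2) ^ 2 := by
          rw [← mul_pow, sq_le_sq, show y ^ 2 - x ^ 2 = (y - x) * (y + x) by ring, abs_mul,
            abs_mul, abs_of_pos hx, abs_of_pos (add_pos hy hx)]
          gcongr
          linarith
        calc _ = (x / 2) ^ lam * ((y - x) ^ 2 * x ^ 2) := by ring
          _ ≤ _ := by gcongr
      have hmain : |r y| ≤ η * ((x / 2) ^ lam * x ^ 2)⁻¹ * (y ^ lam * (y ^ 2 - x ^ 2) ^ 2) := by
        refine (hrδ y hyx).trans ?_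
        rw [mul_assoc]
        gcongr
        rw [inv_mul_eq_div, le_div_iff₀ (by positivity)]
        exact hquad
      have hTJ : 0 ≤ T * J y := by positivity
      calc _ ≤ besselHeatKernel lam t x y *
            (η * ((x / 2) ^ lam * x ^ 2)⁻¹ * (y ^ lam * (y ^ 2 - x ^ 2) ^ 2)) := by gcongr
        _ ≤ _ := by
          rw [zero_mul, zero_add, zero_add, one_mul]
          linarith
    · have hsq : δ ^ 2 ≤ (x - y) ^ 2 := by
        rw [← sq_abs (x - y), abs_sub_comm]
        exact pow_le_pow_left₀ hδ.le (not_lt.1 hyx) 2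
      have hexp : Real.exp (-(x - y) ^ 2 / (4 * t)) ≤
          Real.exp (-(δ ^ 2 / 8) / t) * Real.exp (-(x - y) ^ 2 / 8) := by
        rw [← Real.exp_add, Real.exp_le_exp, div_add_div _ _ ht.ne' (by norm_num),
          div_le_div_iff₀ (by positivity) (by positivity)]
        nlinarith [mul_nonneg ht.le (sub_nonneg.2 hsq),
          mul_nonneg (mul_nonneg ht.le (sq_nonneg (x - y))) (sub_nonneg.2 ht1)]
      have hfirst : 0 ≤ η * ((x / 2) ^ lam * x ^ 2)⁻¹ * (besselHeatKernel lam t x y *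
          (y ^ lam * (0 + 0 * (y ^ 2 - x ^ 2) + 1 * (y ^ 2 - x ^ 2) ^ 2))) := by
        rw [zero_mul, zero_add, zero_add, one_mul]
        positivity
      refine le_add_of_nonneg_of_le hfirst ?_
      calc _ ≤ (x ^ lam / Real.Gamma (lam + 1 / 2) * (t ^ (-lam - 1 / 2) *
              (y ^ lam * (Real.exp (-(δ ^ 2 / 8) / t) * Real.exp (-(x - y) ^ 2 / 8))))) *
              (K * (1 + y ^ lam + y ^ (lam + 4))) := by
            refine mul_le_mul ((besselHeatKernel_le hlam ht hx hy).trans ?_) (hK y hy)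
              (abs_nonneg _) (by positivity)
            gcongr
        _ = _ := by simp only [hTdef, hJ]; ring
  have hI1 := hQint.const_mul (η * ((x / 2) ^ lam * x ^ 2)⁻¹)
  have hI2 := Integrable.const_mul hJint T
  have hle := norm_integral_le_of_norm_le (hI1.add hI2)
    ((ae_restrict_mem measurableSet_Ioi).mono hpt)
  rw [Real.norm_eq_abs] at hle
  refine hle.trans ?_
  simp only [Pi.add_apply]
  rw [integral_add hI1 hI2, integral_const_mul, integral_const_mul, hQ, hTt, ← hκ, mul_assoc t]
  have hηD : η * D = ε / 2 := by rw [hη]; field_simp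
  have h1 : η * ((x / 2) ^ lam * x ^ 2)⁻¹ * (x ^ lam * (0 + 0 * (4 * lam + 2) * t +
      1 * (8 * x ^ 2 * t + 16 * t ^ 2 * κ))) ≤ ε / 2 * t := by
    rw [← hηD, hD]
    have : 8 * x ^ 2 * t + 16 * t ^ 2 * κ ≤ (8 * x ^ 2 + 16 * κ) * t := by
      nlinarith [mul_nonneg (mul_nonneg ht.le hκ0.le) (sub_nonneg.2 ht1)]
    calc _ = η * ((x / 2) ^ lam * x ^ 2)⁻¹ * x ^ lam * (8 * x ^ 2 * t + 16 * t ^ 2 * κ) := by ring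
      _ ≤ η * ((x / 2) ^ lam * x ^ 2)⁻¹ * x ^ lam * ((8 * x ^ 2 + 16 * κ) * t) := by gcongr
      _ = _ := by ring
  have h2 := mul_le_mul_of_nonneg_left htail ht.le
  linarith

theorem abs_heatSemigroup_le {lam x M : ℝ} (hlam : 1 / 2 ≤ lam) (hx : 0 < x) {u : ℝ → ℝ}
    (hM : ∀ y ∈ Ioi (0 : ℝ), |u y| ≤ M) {δ : ℝ} (hδ : 0 < δ) :
    ∃ C, ∀ t, δ ≤ t → |heatSemigroup lam u t x| ≤ C := by
  set c := x ^ lam / Real.Gamma (lam + 1 / 2) * δ ^ (-lam - 1 / 2) with hc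
  have hG : 0 < Real.Gamma (lam + 1 / 2) := Real.Gamma_pos_of_pos (by linarith)
  have hM0 : 0 ≤ M := (abs_nonneg _).trans (hM 1 (mem_Ioi.2 one_pos))
  refine ⟨M * (x ^ lam + c), fun t ht => ?_⟩
  have ht0 : 0 < t := hδ.trans_le ht
  have hmass := integral_besselHeatKernel_mul_rpow hlam ht0 hx
  have hI1 : Integrable (fun y => besselHeatKernel lam t x y * y ^ lam)
      (volume.restrict (Ioi 0)) := by
    by_contra h
    rw [integral_undef h] at hmass
    exact (Real.rpow_pos_of_pos hx lam).ne hmass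
  have hI2 : Integrable ((Ioc (0 : ℝ) 1).indicator fun _ => c) (volume.restrict (Ioi 0)) :=
    (IntegrableOn.integrable_indicator (by simp) measurableSet_Ioc).restrict
  have hI2v : ∫ y in Ioi (0 : ℝ), (Ioc (0 : ℝ) 1).indicator (fun _ => c) y = c := by
    rw [setIntegral_indicator measurableSet_Ioc, inter_eq_self_of_subset_right Ioc_subset_Ioi_self]
    simp
  have hle := norm_integral_le_of_norm_le (f := fun y => besselHeatKernel lam t x y * u y)
    ((hI1.add hI2).const_mul M) ((ae_restrict_mem measurableSet_Ioi).mono fun y hy => by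
      have hW := besselHeatKernel_nonneg hlam ht0 hx hy
      rw [norm_mul, Real.norm_of_nonneg hW, Real.norm_eq_abs, mul_comm]
      refine mul_le_mul (hM y hy) ?_ hW hM0
      have hy : 0 < y := hy
      rw [Pi.add_apply]
      by_cases h1 : y ≤ 1
      · rw [indicator_of_mem (show y ∈ Ioc (0 : ℝ) 1 from ⟨hy, h1⟩)]
        refine le_add_of_nonneg_of_le (by positivity) ((besselHeatKernel_le hlam ht0 hx hy).trans ?_)
        rw [hc]
        gcongr
        have h2 : t ^ (-lam - 1 / 2) ≤ δ ^ (-lam - 1 / 2) :=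
          Real.rpow_le_rpow_of_nonpos hδ ht (by linarith)
        have h3 : y ^ lam ≤ 1 := Real.rpow_le_one hy.le h1 (by linarith)
        have h4 : Real.exp (-(x - y) ^ 2 / (4 * t)) ≤ 1 := by
          rw [Real.exp_le_one_iff, neg_div, neg_nonpos]
          positivity
        calc _ ≤ δ ^ (-lam - 1 / 2) * (1 * 1) := by gcongr
          _ = _ := by ring
      · rw [indicator_of_notMem (fun h => h1 h.2), add_zero]
        exact le_mul_of_one_le_right hW (Real.one_le_rpow (not_le.1 h1).le (by linarith)))
  rw [integral_const_mul] at hle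
  simp only [Pi.add_apply] at hle
  rwa [integral_add hI1 hI2, hmass, hI2v] at hle

theorem abs_sub_rpow_mul_quadratic_le {lam x M A B C v y : ℝ} (hv : |v| ≤ M) (hy : 0 < y) :
    |v - y ^ lam * (A + B * (y ^ 2 - x ^ 2) + C * (y ^ 2 - x ^ 2) ^ 2)| ≤
      (M + (|A| + 2 * |B| * (1 + x ^ 2) + 2 * |C| * (1 + x ^ 4))) *
        (1 + y ^ lam + y ^ (lam + 4)) := by
  have hpow : y ^ (lam + 4) = y ^ lam * y ^ 4 := by
    rw [Real.rpow_add hy]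
    norm_cast
  have hyl : 0 < y ^ lam := by positivity
  have q1 : |y ^ 2 - x ^ 2| ≤ 2 * (1 + x ^ 2) * (1 + y ^ 4) := by
    rw [abs_le]
    constructor <;> nlinarith [sq_nonneg (y ^ 2 - 1), sq_nonneg x, sq_nonneg y,
      mul_nonneg (sq_nonneg x) (sq_nonneg (y ^ 2))]
  have q2 : (y ^ 2 - x ^ 2) ^ 2 ≤ 2 * (1 + x ^ 4) * (1 + y ^ 4) := by
    nlinarith [sq_nonneg (y ^ 2 + x ^ 2), sq_nonneg (x ^ 2 * y ^ 2)]
  have hpb : |A + B * (y ^ 2 - x ^ 2) + C * (y ^ 2 - x ^ 2) ^ 2| ≤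
      (|A| + 2 * |B| * (1 + x ^ 2) + 2 * |C| * (1 + x ^ 4)) * (1 + y ^ 4) := by
    calc _ ≤ |A| + |B| * |y ^ 2 - x ^ 2| + |C| * (y ^ 2 - x ^ 2) ^ 2 := by
          refine (abs_add_three _ _ _).trans ?_
          rw [abs_mul, abs_mul, abs_of_nonneg (sq_nonneg (y ^ 2 - x ^ 2))]
      _ ≤ |A| * (1 + y ^ 4) + |B| * (2 * (1 + x ^ 2) * (1 + y ^ 4)) +
          |C| * (2 * (1 + x ^ 4) * (1 + y ^ 4)) := by
          gcongr
          exact le_mul_of_one_le_right (abs_nonneg _) (by nlinarith [sq_nonneg (y ^ 2)])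
      _ = _ := by ring
  have hM0 : 0 ≤ M := (abs_nonneg _).trans hv
  have hN : 0 ≤ |A| + 2 * |B| * (1 + x ^ 2) + 2 * |C| * (1 + x ^ 4) := by positivity
  generalize |A| + 2 * |B| * (1 + x ^ 2) + 2 * |C| * (1 + x ^ 4) = N at *
  refine (abs_sub _ _).trans ?_
  rw [abs_mul, abs_of_pos hyl, hpow]
  calc _ ≤ M + y ^ lam * (N * (1 + y ^ 4)) := by gcongr
    _ ≤ _ := by
      have : 0 ≤ M * (y ^ lam + y ^ lam * y ^ 4) := by positivity
      nlinarith

/-- A function that is twice differentiable at `x` agrees to second order at `x` with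
`y ^ lam` times a quadratic polynomial in `y ^ 2 - x ^ 2`. -/
theorem exists_quadratic_approx {x : ℝ} (lam : ℝ) (hx : 0 < x) {u : ℝ → ℝ}
    (hu : ContDiffOn ℝ 2 u (Ioi 0)) :
    ∃ A B C : ℝ, x ^ lam * A = u x ∧
      x ^ lam * (B * (4 * lam + 2) + C * (8 * x ^ 2)) =
        deriv (deriv u) x - lam * (lam - 1) / x ^ 2 * u x ∧
      ∀ ε > 0, ∃ δ, 0 < δ ∧ δ ≤ x / 2 ∧ ∀ y, |y - x| < δ →
        |u y - y ^ lam * (A + B * (y ^ 2 - x ^ 2) + C * (y ^ 2 - x ^ 2) ^ 2)| ≤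
          ε * (y - x) ^ 2 := by
  have hd1 (y : ℝ) (hy : 0 < y) : HasDerivAt u (deriv u y) y :=
    ((hu.differentiableOn (by norm_num)).differentiableAt (Ioi_mem_nhds hy)).hasDerivAt
  have hd2 : HasDerivAt (deriv u) (deriv (deriv u) x) x :=
    (((hu.deriv_of_isOpen (m := 1) isOpen_Ioi (by norm_num)).differentiableOn
      (by norm_num)).differentiableAt (Ioi_mem_nhds hx)).hasDerivAt
  set L := deriv (deriv u) x - lam * (lam - 1) / x ^ 2 * u x with hL
  have hxl : 0 < x ^ lam := by positivity
  set A := u x / x ^ lam with hA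
  set B := (deriv u x - lam * u x / x) / (2 * x * x ^ lam) with hB
  set C := (L / x ^ lam - (4 * lam + 2) * B) / (8 * x ^ 2) with hC
  set p : ℝ → ℝ := fun y => A + B * (y ^ 2 - x ^ 2) + C * (y ^ 2 - x ^ 2) ^ 2 with hp
  set p' : ℝ → ℝ := fun y => B * (2 * y) + C * (2 * (y ^ 2 - x ^ 2) * (2 * y)) with hp'
  set p'' : ℝ → ℝ := fun y =>
    B * 2 + C * (2 * (2 * y) * (2 * y) + 2 * (y ^ 2 - x ^ 2) * 2) with hp''
  have hsq (y : ℝ) : HasDerivAt (fun z : ℝ => z ^ 2 - x ^ 2) (2 * y) y := by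
    simpa using (hasDerivAt_pow 2 y).sub_const (x ^ 2)
  have hlin (y : ℝ) : HasDerivAt (fun z : ℝ => 2 * z) 2 y := by
    simpa using (hasDerivAt_id y).const_mul 2
  have hpd (y : ℝ) : HasDerivAt p (p' y) y := by
    have h := (((hsq y).const_mul B).const_add A).add (((hsq y).pow 2).const_mul C)
    refine h.congr_deriv ?_
    simp [hp']
  have hpd' (y : ℝ) : HasDerivAt p' (p'' y) y :=
    ((hlin y).const_mul B).add ((((hsq y).const_mul 2).mul (hlin y)).const_mul C)
  have hrp (a y : ℝ) (hy : 0 < y) : HasDerivAt (fun z : ℝ => z ^ a) (a * y ^ (a - 1)) y :=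
    Real.hasDerivAt_rpow_const (Or.inl hy.ne')
  set r : ℝ → ℝ := fun y => u y - y ^ lam * p y with hr
  set r' : ℝ → ℝ := fun y => deriv u y - (lam * y ^ (lam - 1) * p y + y ^ lam * p' y) with hr'
  have hrd (y : ℝ) (hy : 0 < y) : HasDerivAt r (r' y) y :=
    (hd1 y hy).sub ((hrp lam y hy).mul (hpd y))
  have e1 : x ^ (lam - 1) = x ^ lam / x := by rw [Real.rpow_sub hx, Real.rpow_one]
  have e2 : x ^ (lam - 1 - 1) = x ^ lam / x ^ 2 := by
    rw [Real.rpow_sub hx, e1, Real.rpow_one, div_div, sq]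
  have hr0 : r x = 0 := by
    simp only [hr, hp, hA]
    field_simp
    ring
  have hr1 : r' x = 0 := by
    simp only [hr', hp, hp', hA, hB, e1]
    field_simp
    ring
  have hr2 : HasDerivAt r' 0 x := by
    refine (hd2.sub ((((hrp (lam - 1) x hx).const_mul lam).mul (hpd x)).add
      ((hrp lam x hx).mul (hpd' x)))).congr_deriv ?_
    simp only [hp, hp', hp'', e1, e2, hC, hA, hL]
    field_simp
    ring
  refine ⟨A, B, C, by rw [hA]; field_simp, ?_,
    fun ε hε => exists_abs_le_mul_sq_of_hasDerivAt hx hrd hr0 hr1 hr2 hε⟩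
  rw [hC]
  field_simp
  ring

theorem abs_heatSemigroup_sub_le {lam x M : ℝ} (hlam : 1 / 2 ≤ lam) (hx : 0 < x) {u : ℝ → ℝ}
    (hM : ∀ y ∈ Ioi (0 : ℝ), |u y| ≤ M) (hu : ContDiffOn ℝ 2 u (Ioi 0)) {ε : ℝ} (hε : 0 < ε) :
    ∃ δ > 0, ∀ t, 0 < t → t ≤ δ → |heatSemigroup lam u t x - u x -
      (deriv (deriv u) x - lam * (lam - 1) / x ^ 2 * u x) * t| ≤ ε * t := by
  obtain ⟨A, B, C, hA, hL, happ⟩ := exists_quadratic_approx lam hx hu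
  set r : ℝ → ℝ := fun y =>
    u y - y ^ lam * (A + B * (y ^ 2 - x ^ 2) + C * (y ^ 2 - x ^ 2) ^ 2) with hr
  have hrK (y : ℝ) (hy : 0 < y) := abs_sub_rpow_mul_quadratic_le (lam := lam) (x := x) (A := A)
    (B := B) (C := C) (hM y hy) hy
  have hrm : AEStronglyMeasurable r (volume.restrict (Ioi 0)) :=
    (hu.continuousOn.aestronglyMeasurable measurableSet_Ioi).sub
      (Measurable.aestronglyMeasurable (by fun_prop))
  obtain ⟨τ, hτ, hτb⟩ := abs_integral_besselHeatKernel_mul_le hlam hx hrK happ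
    (show 0 < ε / 2 by positivity)
  set R := x ^ lam * (C * (16 * ((lam + 1 / 2) * (lam + 3 / 2)))) with hR
  refine ⟨min τ (ε / 2 / (|R| + 1)), by positivity, fun t ht htτ => ?_⟩
  have hrb := hτb t ht (htτ.trans (min_le_left _ _))
  have htR : t * (|R| + 1) ≤ ε / 2 :=
    (le_div_iff₀ (by positivity)).1 (htτ.trans (min_le_right _ _))
  obtain ⟨hQint, hQ⟩ := integral_besselHeatKernel_mul_quadratic hlam ht hx A B C
  have hdecomp : heatSemigroup lam u t x = x ^ lam * (A + B * (4 * lam + 2) * t +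
      C * (8 * x ^ 2 * t + 16 * t ^ 2 * ((lam + 1 / 2) * (lam + 3 / 2)))) +
      ∫ y in Ioi (0 : ℝ), besselHeatKernel lam t x y * r y := by
    rw [← hQ, ← integral_add hQint (integrableOn_besselHeatKernel_mul hlam ht hx hrm hrK)]
    refine integral_congr_ae (.of_forall fun y => ?_)
    simp only [hr]
    ring
  have hlead : x ^ lam * (A + B * (4 * lam + 2) * t +
      C * (8 * x ^ 2 * t + 16 * t ^ 2 * ((lam + 1 / 2) * (lam + 3 / 2)))) =
      u x + (deriv (deriv u) x - lam * (lam - 1) / x ^ 2 * u x) * t + R * t ^ 2 := by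
    rw [← hL, ← hA, hR]
    ring
  rw [hdecomp, hlead]
  calc _ = |R * t ^ 2 + ∫ y in Ioi (0 : ℝ), besselHeatKernel lam t x y * r y| := by
        congr 1
        ring
    _ ≤ |R| * t ^ 2 + ε / 2 * t := by
        refine (abs_add_le _ _).trans (add_le_add ?_ hrb)
        rw [abs_mul, abs_of_nonneg (sq_nonneg t)]
    _ ≤ ε * t := by nlinarith

/-- Pointwise limit of `Δ_λ^σ u` as `σ → 1⁻`: one recovers the Bessel operator `Δ_λ u`. -/
theorem limit_sigma_one
    (lam : ℝ) (hlam : 2 ≤ lam)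
    (u : ℝ → ℝ) (hbdd : ∃ M : ℝ, ∀ x ∈ Set.Ioi (0 : ℝ), |u x| ≤ M)
    (hC2 : ContDiffOn ℝ 2 u (Set.Ioi 0))
    (hbdd' : ∃ M : ℝ, ∀ x ∈ Set.Ioi (0 : ℝ), |deriv u x| ≤ M) :
    ∀ x : ℝ, 0 < x →
      Tendsto (fun σ : ℝ => 1 / gammaNeg σ *
          ∫ t in Set.Ioi (0 : ℝ), (heatSemigroup lam u t x - u x) * t ^ (-1 - σ))
        (nhdsWithin 1 (Set.Iio 1))
        (nhds (-deriv (deriv u) x + lam * (lam - 1) / x ^ 2 * u x)) := by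
  intro x hx
  obtain ⟨M, hM⟩ := hbdd
  have hl : 1 / 2 ≤ lam := by linarith
  have h := tendsto_one_div_gammaNeg_mul_integral
    (F := fun t => heatSemigroup lam u t x - u x)
    (L := deriv (deriv u) x - lam * (lam - 1) / x ^ 2 * u x)
    ((aestronglyMeasurable_heatSemigroup hl hx hC2.continuousOn).sub
      aestronglyMeasurable_const)
    (fun ε hε => abs_heatSemigroup_sub_le hl hx hM hC2 hε)
    (fun δ hδ => by
      obtain ⟨C, hC⟩ := abs_heatSemigroup_le hl hx hM hδ
      exact ⟨C + |u x|, fun t ht =>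
        (abs_sub _ _).trans (add_le_add_left (hC t ht) _)⟩)
  rwa [neg_sub, sub_eq_neg_add] at h
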